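/- arXiv:2502.06051 — 7 statements merged into one kernel-verified Lean document; each statement's English description precedes it below -/
import Mathlib

section
/- In the finite KL-regularized contextual bandit setup with reward r : S×A → ℝ, let g : S×A → ℝ be arbitrary and for γ ∈ [0,1] set g_γ = γ·g + (1−γ)·r and π_γ = π_{g_γ} (the Gibbs policy of g_γ). Then there exists γ ∈ [0,1] such that J(π_r) − J(π_g) ≤ η·Σ_{s∈S} ρ(s)·Σ_{a∈A} π_γ(a|s)·(r(s,a) − g(s,a))². -/
/-- The Gibbs policy of `g` relative to the reference policy `πref` with inverse
temperature `η`. -/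
noncomputable def gibbs {S A : Type*} [Fintype A] (πref : S → A → ℝ) (η : ℝ)
    (g : S → A → ℝ) : S → A → ℝ :=
  fun s a => πref s a * Real.exp (η * g s a) / ∑ a', πref s a' * Real.exp (η * g s a')

/-- The KL-regularized objective of a policy `π` with reward `r`. -/
noncomputable def Jkl {S A : Type*} [Fintype S] [Fintype A] (ρ : S → ℝ)
    (πref : S → A → ℝ) (η : ℝ) (r : S → A → ℝ) (π : S → A → ℝ) : ℝ :=
  ∑ s, ρ s * ∑ a, π s a * (r s a - η⁻¹ * Real.log (π s a / πref s a))

/-!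
Along a differentiable path `h t` of rewards, the objective of the Gibbs policies satisfies
`d/dt J(π_{h t}) = η · E_ρ[Cov_{h t}(r - h t, h' t)]`: the derivative of `η⁻¹ log Z` cancels the
term coming from differentiating `r - h t` itself. On the segment `h γ = γ g + (1 - γ) r` we have
`r - h γ = γ (r - g)` and `h' = -(r - g)`, so the derivative is `-η γ E_ρ[Var_γ(r - g)]`. The mean
value theorem turns this into an exact formula for `J(π_r) - J(π_g)`, and the bound follows from
`γ ≤ 1` and `Var ≤ E[(r - g)²]`.
-/

section Gibbs

variable {S A : Type*} [Fintype A] {πref : S → A → ℝ} {η : ℝ} {s : S}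

/-- The partition function `Z_h(s)` normalizing the Gibbs policy of `h`; `η⁻¹ log Z_h(s)` is the
optimal regularized value at `s` for the reward `h`. -/
noncomputable def gibbsPartition (πref : S → A → ℝ) (η : ℝ) (h : S → A → ℝ) (s : S) : ℝ :=
  ∑ a, πref s a * Real.exp (η * h s a)

/-- The conditional expectation of `f` given the state `s` under the Gibbs policy of `h`. -/
noncomputable def gibbsMean (πref : S → A → ℝ) (η : ℝ) (h f : S → A → ℝ) (s : S) : ℝ :=
  ∑ a, gibbs πref η h s a * f s a

/-- The conditional covariance of `f` and `u` given the state `s` under the Gibbs policy of `h`.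
The variance of `f` is written `gibbsCov πref η h f f s`. -/
noncomputable def gibbsCov (πref : S → A → ℝ) (η : ℝ) (h f u : S → A → ℝ) (s : S) : ℝ :=
  gibbsMean πref η h (f * u) s - gibbsMean πref η h f s * gibbsMean πref η h u s

theorem gibbsPartition_pos (hπ : ∀ a, 0 ≤ πref s a) (hmass : 0 < ∑ a, πref s a)
    (h : S → A → ℝ) : 0 < gibbsPartition πref η h s := by
  obtain ⟨a, ha, hpos⟩ := Finset.exists_lt_of_sum_lt (s := Finset.univ) (f := fun _ : A => (0 : ℝ))
    (by simpa only [Finset.sum_const_zero] using hmass)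
  exact Finset.sum_pos' (fun b _ => mul_nonneg (hπ b) (Real.exp_pos _).le)
    ⟨a, ha, mul_pos hpos (Real.exp_pos _)⟩

theorem gibbs_nonneg (hπ : ∀ a, 0 ≤ πref s a) (h : S → A → ℝ) (a : A) :
    0 ≤ gibbs πref η h s a :=
  div_nonneg (mul_nonneg (hπ a) (Real.exp_pos _).le)
    (Finset.sum_nonneg fun b _ => mul_nonneg (hπ b) (Real.exp_pos _).le)

theorem sum_gibbs {h : S → A → ℝ} (hZ : gibbsPartition πref η h s ≠ 0) :
    ∑ a, gibbs πref η h s a = 1 := by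
  unfold gibbs
  rw [← Finset.sum_div]
  exact div_self hZ

theorem gibbsMean_eq_sum_div (h f : S → A → ℝ) :
    gibbsMean πref η h f s =
      (∑ a, πref s a * Real.exp (η * h s a) * f s a) / gibbsPartition πref η h s := by
  simp only [gibbsMean, gibbs, gibbsPartition, Finset.sum_div, div_mul_eq_mul_div]

theorem gibbsMean_nonneg (hπ : ∀ a, 0 ≤ πref s a) (h : S → A → ℝ) {f : S → A → ℝ}
    (hf : ∀ a, 0 ≤ f s a) : 0 ≤ gibbsMean πref η h f s :=
  Finset.sum_nonneg fun a _ => mul_nonneg (gibbs_nonneg hπ h a) (hf a)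

theorem gibbsMean_smul (c : ℝ) (h f : S → A → ℝ) :
    gibbsMean πref η h (c • f) s = c * gibbsMean πref η h f s := by
  simp only [gibbsMean, Pi.smul_apply, smul_eq_mul, Finset.mul_sum, mul_left_comm]

theorem gibbsMean_neg (h f : S → A → ℝ) :
    gibbsMean πref η h (-f) s = -gibbsMean πref η h f s := by
  simp only [gibbsMean, Pi.neg_apply, mul_neg, Finset.sum_neg_distrib]

theorem gibbsCov_smul_neg (c : ℝ) (h f u : S → A → ℝ) :
    gibbsCov πref η h (c • f) (-u) s = -(c * gibbsCov πref η h f u s) := by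
  simp only [gibbsCov, mul_neg, smul_mul_assoc, gibbsMean_neg, gibbsMean_smul]
  ring

theorem gibbsCov_self_le_gibbsMean_sq (h f : S → A → ℝ) :
    gibbsCov πref η h f f s ≤ gibbsMean πref η h (f ^ 2) s := by
  rw [gibbsCov, ← pow_two]
  exact sub_le_self _ (mul_self_nonneg _)

theorem gibbs_mul_log_div {h : S → A → ℝ} (hZ : gibbsPartition πref η h s ≠ 0) (a : A) :
    gibbs πref η h s a * Real.log (gibbs πref η h s a / πref s a) =
      gibbs πref η h s a * (η * h s a - Real.log (gibbsPartition πref η h s)) := by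
  obtain hπ | hπ := eq_or_ne (πref s a) 0
  · simp [gibbs, hπ]
  · have hratio : gibbs πref η h s a / πref s a =
        Real.exp (η * h s a) / gibbsPartition πref η h s := by
      rw [gibbs, ← gibbsPartition, div_right_comm, mul_div_cancel_left₀ _ hπ]
    rw [hratio, Real.log_div (Real.exp_ne_zero _) hZ, Real.log_exp]

theorem sum_gibbs_mul_sub_log_div (hη : η ≠ 0) {h : S → A → ℝ}
    (hZ : gibbsPartition πref η h s ≠ 0) (r : S → A → ℝ) :
    ∑ a, gibbs πref η h s a * (r s a - η⁻¹ * Real.log (gibbs πref η h s a / πref s a)) =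
      gibbsMean πref η h (r - h) s + η⁻¹ * Real.log (gibbsPartition πref η h s) := by
  set L := Real.log (gibbsPartition πref η h s)
  calc ∑ a, gibbs πref η h s a * (r s a - η⁻¹ * Real.log (gibbs πref η h s a / πref s a))
      = ∑ a, (gibbs πref η h s a * (r - h) s a + gibbs πref η h s a * (η⁻¹ * L)) := by
        refine Finset.sum_congr rfl fun a _ => ?_
        rw [mul_sub, mul_left_comm, gibbs_mul_log_div hZ, Pi.sub_apply, Pi.sub_apply]
        field_simp
        ring
    _ = gibbsMean πref η h (r - h) s + η⁻¹ * L := by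
        rw [Finset.sum_add_distrib, ← Finset.sum_mul, sum_gibbs hZ, one_mul, gibbsMean]

section Path

variable {h f : ℝ → S → A → ℝ} {h' f' : S → A → ℝ} {t : ℝ}

theorem hasDerivAt_gibbsPartition (hh : ∀ a, HasDerivAt (fun x => h x s a) (h' s a) t) :
    HasDerivAt (fun x => gibbsPartition πref η (h x) s)
      (η * ∑ a, πref s a * Real.exp (η * h t s a) * h' s a) t := by
  rw [Finset.mul_sum]
  refine HasDerivAt.fun_sum fun a _ => ?_
  exact (((hh a).const_mul η).exp.const_mul (πref s a)).congr_deriv (by ring)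

theorem hasDerivAt_log_gibbsPartition (hh : ∀ a, HasDerivAt (fun x => h x s a) (h' s a) t)
    (hZ : gibbsPartition πref η (h t) s ≠ 0) :
    HasDerivAt (fun x => Real.log (gibbsPartition πref η (h x) s))
      (η * gibbsMean πref η (h t) h' s) t :=
  ((hasDerivAt_gibbsPartition hh).log hZ).congr_deriv
    (by rw [gibbsMean_eq_sum_div, mul_div_assoc])

theorem hasDerivAt_gibbsMean (hh : ∀ a, HasDerivAt (fun x => h x s a) (h' s a) t)
    (hf : ∀ a, HasDerivAt (fun x => f x s a) (f' s a) t)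
    (hZ : gibbsPartition πref η (h t) s ≠ 0) :
    HasDerivAt (fun x => gibbsMean πref η (h x) (f x) s)
      (gibbsMean πref η (h t) f' s + η * gibbsCov πref η (h t) (f t) h' s) t := by
  have hnum : HasDerivAt (fun x => ∑ a, πref s a * Real.exp (η * h x s a) * f x s a)
      ((∑ a, πref s a * Real.exp (η * h t s a) * f' s a) +
        η * ∑ a, πref s a * Real.exp (η * h t s a) * (f t * h') s a) t := by
    rw [Finset.mul_sum, ← Finset.sum_add_distrib]
    refine HasDerivAt.fun_sum fun a _ => ?_
    exact ((((hh a).const_mul η).exp.const_mul (πref s a)).mul (hf a)).congr_deriv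
      (by simp only [Pi.mul_apply]; ring)
  simp only [gibbsCov, gibbsMean_eq_sum_div]
  refine (hnum.div (hasDerivAt_gibbsPartition hh) hZ).congr_deriv ?_
  field_simp
  ring

theorem hasDerivAt_Jkl_gibbs [Fintype S] {ρ : S → ℝ} (hη : η ≠ 0)
    (hZ : ∀ x s, gibbsPartition πref η (h x) s ≠ 0) (r : S → A → ℝ)
    (hh : ∀ s a, HasDerivAt (fun x => h x s a) (h' s a) t) :
    HasDerivAt (fun x => Jkl ρ πref η r (gibbs πref η (h x)))
      (η * ∑ s, ρ s * gibbsCov πref η (h t) (r - h t) h' s) t := by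
  simp only [Jkl, sum_gibbs_mul_sub_log_div hη (hZ _ _), Finset.mul_sum, mul_left_comm η]
  refine HasDerivAt.fun_sum fun s _ => HasDerivAt.const_mul (ρ s) ?_
  have hgap : ∀ a, HasDerivAt (fun x => (r - h x) s a) ((-h') s a) t :=
    fun a => (hh s a).const_sub (r s a)
  refine ((hasDerivAt_gibbsMean (hh s) hgap (hZ t s)).add
    ((hasDerivAt_log_gibbsPartition (hh s) (hZ t s)).const_mul η⁻¹)).congr_deriv ?_
  rw [gibbsMean_neg, inv_mul_cancel_left₀ hη]
  ring

end Path

end Gibbs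

section Segment

variable {S A : Type*}

/-- The point `g_γ = γ g + (1 - γ) r` of the segment of rewards from `r` (at `γ = 0`) to `g`
(at `γ = 1`). -/
def rewardSegment (r g : S → A → ℝ) (γ : ℝ) : S → A → ℝ :=
  fun s a => γ * g s a + (1 - γ) * r s a

theorem rewardSegment_zero (r g : S → A → ℝ) : rewardSegment r g 0 = r := by
  ext s a
  simp [rewardSegment]

theorem rewardSegment_one (r g : S → A → ℝ) : rewardSegment r g 1 = g := by
  ext s a
  simp [rewardSegment]

theorem sub_rewardSegment (r g : S → A → ℝ) (γ : ℝ) :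
    r - rewardSegment r g γ = γ • (r - g) := by
  ext s a
  simp only [rewardSegment, Pi.sub_apply, Pi.smul_apply, smul_eq_mul]
  ring

theorem hasDerivAt_rewardSegment (r g : S → A → ℝ) (γ : ℝ) (s : S) (a : A) :
    HasDerivAt (fun x => rewardSegment r g x s a) ((-(r - g)) s a) γ :=
  (((hasDerivAt_id γ).mul_const (g s a)).add
    (((hasDerivAt_id γ).const_sub 1).mul_const (r s a))).congr_deriv
    (by simp only [Pi.neg_apply, Pi.sub_apply]; ring)

variable [Fintype S] [Fintype A] {ρ : S → ℝ} {πref : S → A → ℝ} {η : ℝ}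

theorem exists_Jkl_gibbs_sub_eq_gibbsCov (hη : η ≠ 0) (r g : S → A → ℝ)
    (hZ : ∀ γ s, gibbsPartition πref η (rewardSegment r g γ) s ≠ 0) :
    ∃ γ ∈ Set.Ioo (0 : ℝ) 1,
      Jkl ρ πref η r (gibbs πref η r) - Jkl ρ πref η r (gibbs πref η g) =
        η * ∑ s, ρ s * (γ * gibbsCov πref η (rewardSegment r g γ) (r - g) (r - g) s) := by
  have hderiv (γ : ℝ) := hasDerivAt_Jkl_gibbs (ρ := ρ) hη hZ r (hasDerivAt_rewardSegment r g γ)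
  obtain ⟨γ, hγ, hslope⟩ := exists_hasDerivAt_eq_slope _ _ zero_lt_one
    (fun x _ => (hderiv x).continuousAt.continuousWithinAt) (fun x _ => hderiv x)
  refine ⟨γ, hγ, ?_⟩
  simp only [sub_rewardSegment, gibbsCov_smul_neg, mul_neg, Finset.sum_neg_distrib,
    rewardSegment_zero, rewardSegment_one, sub_zero, div_one] at hslope
  linarith

theorem stmt3_general (hρ : ∀ s, 0 ≤ ρ s) (hπ : ∀ s a, 0 ≤ πref s a)
    (hmass : ∀ s, 0 < ∑ a, πref s a) (hη : 0 < η) (r g : S → A → ℝ) :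
    ∃ γ ∈ Set.Icc (0 : ℝ) 1,
      Jkl ρ πref η r (gibbs πref η r) - Jkl ρ πref η r (gibbs πref η g) ≤
        η * ∑ s, ρ s * ∑ a,
          gibbs πref η (fun s' a' => γ * g s' a' + (1 - γ) * r s' a') s a
            * (r s a - g s a) ^ 2 := by
  obtain ⟨γ, hγ, hgap⟩ := exists_Jkl_gibbs_sub_eq_gibbsCov (ρ := ρ) hη.ne' r g
    fun γ s => (gibbsPartition_pos (hπ s) (hmass s) (rewardSegment r g γ)).ne'
  refine ⟨γ, Set.Ioo_subset_Icc_self hγ, hgap.trans_le ?_⟩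
  have hvar (s : S) : γ * gibbsCov πref η (rewardSegment r g γ) (r - g) (r - g) s ≤
      gibbsMean πref η (rewardSegment r g γ) ((r - g) ^ 2) s :=
    (mul_le_mul_of_nonneg_left (gibbsCov_self_le_gibbsMean_sq _ _) hγ.1.le).trans
      (mul_le_of_le_one_left (gibbsMean_nonneg (hπ s) _ fun a => sq_nonneg _) hγ.2.le)
  exact mul_le_mul_of_nonneg_left
    (Finset.sum_le_sum fun s _ => mul_le_mul_of_nonneg_left (hvar s) (hρ s)) hη.le

end Segment

/-- Mean-value-type suboptimality bound: there exists `γ ∈ [0,1]` such that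
`J(π_r) − J(π_g) ≤ η · E_{ρ × π_γ}[(r − g)²]` where `π_γ` is the Gibbs policy of
`γ·g + (1−γ)·r`. -/
theorem stmt3 {S A : Type*} [Fintype S] [Fintype A] [Nonempty S] [Nonempty A]
    (ρ : S → ℝ) (hρ0 : ∀ s, 0 ≤ ρ s) (hρ1 : ∑ s, ρ s = 1)
    (πref : S → A → ℝ) (hpos : ∀ s a, 0 < πref s a) (hsum : ∀ s, ∑ a, πref s a = 1)
    (η : ℝ) (hη : 0 < η) (r g : S → A → ℝ) :
    ∃ γ ∈ Set.Icc (0 : ℝ) 1,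
      Jkl ρ πref η r (gibbs πref η r) - Jkl ρ πref η r (gibbs πref η g) ≤
        η * ∑ s, ρ s * ∑ a,
          gibbs πref η (fun s' a' => γ * g s' a' + (1 - γ) * r s' a') s a
            * (r s a - g s a) ^ 2 :=
  stmt3_general hρ0 (fun s a => (hpos s a).le) (fun s => by rw [hsum s]; exact one_pos) hη r g
end

section
/- Let A be a nonempty finite set, q a probability mass function on A with q(a) > 0 for all a, α > 0, and f : ℝ → ℝ differentiable on [0,∞) and α-strongly convex on [0,∞), in the sense that f(x) ≥ f(y) + f'(y)·(x−y) + (α/2)·(x−y)² for all x, y ≥ 0. Then for all probability mass functions π₁, π₂ on A: Σ_{a∈A} q(a)·f(π₁(a)/q(a)) − Σ_{a∈A} q(a)·f(π₂(a)/q(a)) − Σ_{a∈A} (π₁(a) − π₂(a))·f'(π₂(a)/q(a)) ≥ (α/2)·(Σ_{a∈A} |π₁(a) − π₂(a)|)². In particular, since Σ_a |π₁(a) − π₂(a)| equals twice the total variation distance between π₁ and π₂, the map π ↦ D_f(π‖q) is 4α-strongly convex with respect to total variation. -/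
/-!
Multiplying the strong convexity inequality at the ratios `π₁ a / q a` and `π₂ a / q a` by `q a`
and summing bounds the Bregman gap of the `f`-divergence below by `α / 2` times the weighted
square distance `∑ (π₁ a - π₂ a) ^ 2 / q a`. By Cauchy–Schwarz in Sedrakyan's form this is at
least `(∑ |π₁ a - π₂ a|) ^ 2 / ∑ q a`.
-/

section StrongSubgradient

variable {ι 𝕜 : Type*} [Field 𝕜] [LinearOrder 𝕜] [IsStrictOrderedRing 𝕜]

/-- `g` selects, at each point of `S`, a subgradient of `f` relative to `S` with quadratic
modulus `α`: the first-order form of `α`-strong convexity, in which the derivative of `f` is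
replaced by an arbitrary choice of slopes so that `f` may have kinks. -/
def IsStrongSubgradientOn (α : 𝕜) (f g : 𝕜 → 𝕜) (S : Set 𝕜) : Prop :=
  ∀ x ∈ S, ∀ y ∈ S, f y + g y * (x - y) + α / 2 * (x - y) ^ 2 ≤ f x

variable {α : 𝕜} {f g : 𝕜 → 𝕜} {S : Set 𝕜}

theorem IsStrongSubgradientOn.le_perspective_gap (hg : IsStrongSubgradientOn α f g S) {u v t : 𝕜}
    (ht : 0 < t) (hu : u / t ∈ S) (hv : v / t ∈ S) :
    α / 2 * ((u - v) ^ 2 / t) ≤ t * f (u / t) - t * f (v / t) - (u - v) * g (v / t) := by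
  have scaled := mul_le_mul_of_nonneg_left (hg (u / t) hu (v / t) hv) ht.le
  have linear_term : t * (g (v / t) * (u / t - v / t)) = (u - v) * g (v / t) := by
    rw [← sub_div, mul_left_comm, mul_div_cancel₀ _ ht.ne', mul_comm]
  have quadratic_term : t * (α / 2 * (u / t - v / t) ^ 2) = α / 2 * ((u - v) ^ 2 / t) := by
    field_simp
  linarith

theorem IsStrongSubgradientOn.le_sum_perspective_gap (hg : IsStrongSubgradientOn α f g S)
    (s : Finset ι) {q π₁ π₂ : ι → 𝕜} (hq : ∀ a ∈ s, 0 < q a)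
    (hπ₁ : ∀ a ∈ s, π₁ a / q a ∈ S) (hπ₂ : ∀ a ∈ s, π₂ a / q a ∈ S) :
    α / 2 * ∑ a ∈ s, (π₁ a - π₂ a) ^ 2 / q a ≤
      (∑ a ∈ s, q a * f (π₁ a / q a)) - (∑ a ∈ s, q a * f (π₂ a / q a))
        - ∑ a ∈ s, (π₁ a - π₂ a) * g (π₂ a / q a) := by
  rw [Finset.mul_sum, ← Finset.sum_sub_distrib, ← Finset.sum_sub_distrib]
  exact Finset.sum_le_sum fun a ha => hg.le_perspective_gap (hq a ha) (hπ₁ a ha) (hπ₂ a ha)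

theorem sq_sum_abs_div_le_sum_sq_div (s : Finset ι) (x : ι → 𝕜) {q : ι → 𝕜}
    (hq : ∀ a ∈ s, 0 < q a) :
    (∑ a ∈ s, |x a|) ^ 2 / ∑ a ∈ s, q a ≤ ∑ a ∈ s, x a ^ 2 / q a := by
  simpa only [sq_abs] using Finset.sq_sum_div_le_sum_sq_div s (fun a => |x a|) hq

theorem stmt8_general (s : Finset ι) {q π₁ π₂ : ι → 𝕜} (hq : ∀ a ∈ s, 0 < q a) (hα : 0 ≤ α)
    (hg : IsStrongSubgradientOn α f g S)
    (hπ₁ : ∀ a ∈ s, π₁ a / q a ∈ S) (hπ₂ : ∀ a ∈ s, π₂ a / q a ∈ S) :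
    α / 2 * ((∑ a ∈ s, |π₁ a - π₂ a|) ^ 2 / ∑ a ∈ s, q a) ≤
      (∑ a ∈ s, q a * f (π₁ a / q a)) - (∑ a ∈ s, q a * f (π₂ a / q a))
        - ∑ a ∈ s, (π₁ a - π₂ a) * g (π₂ a / q a) :=
  calc α / 2 * ((∑ a ∈ s, |π₁ a - π₂ a|) ^ 2 / ∑ a ∈ s, q a)
    _ ≤ α / 2 * ∑ a ∈ s, (π₁ a - π₂ a) ^ 2 / q a :=
      mul_le_mul_of_nonneg_left (sq_sum_abs_div_le_sum_sq_div s _ hq) (div_nonneg hα zero_le_two)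
    _ ≤ _ := hg.le_sum_perspective_gap s hq hπ₁ hπ₂

end StrongSubgradient

/-- If `f` is differentiable and `α`-strongly convex on `[0,∞)`, then the Bregman
gap of the `f`-divergence `π ↦ D_f(π‖q)` between two pmfs `π₁, π₂` is at least
`(α/2)·(Σ_a |π₁(a) − π₂(a)|)²`; i.e. `D_f(·‖q)` is `4α`-strongly convex with
respect to total variation. -/
theorem stmt8 {A : Type*} [Fintype A] [Nonempty A]
    (q : A → ℝ) (hq0 : ∀ a, 0 < q a) (hq1 : ∑ a, q a = 1)
    (α : ℝ) (hα : 0 < α)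
    (f f' : ℝ → ℝ)
    (hdiff : ∀ x ∈ Set.Ici (0 : ℝ), HasDerivWithinAt f (f' x) (Set.Ici 0) x)
    (hsc : ∀ x ∈ Set.Ici (0 : ℝ), ∀ y ∈ Set.Ici (0 : ℝ),
      f y + f' y * (x - y) + α / 2 * (x - y) ^ 2 ≤ f x)
    (π₁ π₂ : A → ℝ)
    (hπ₁0 : ∀ a, 0 ≤ π₁ a) (hπ₁1 : ∑ a, π₁ a = 1)
    (hπ₂0 : ∀ a, 0 ≤ π₂ a) (hπ₂1 : ∑ a, π₂ a = 1) :
    α / 2 * (∑ a, |π₁ a - π₂ a|) ^ 2 ≤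
      (∑ a, q a * f (π₁ a / q a)) - (∑ a, q a * f (π₂ a / q a))
        - ∑ a, (π₁ a - π₂ a) * f' (π₂ a / q a) := by
  simpa only [hq1, div_one] using stmt8_general Finset.univ (fun a _ => hq0 a) hα.le hsc
    (fun a _ => div_nonneg (hπ₁0 a) (hq0 a).le) (fun a _ => div_nonneg (hπ₂0 a) (hq0 a).le)
end

section
/- In the finite f-divergence-regularized contextual bandit setup, let r, g : S×A → ℝ, and let π*, π̂ be policies such that for every s ∈ S, π*(·|s) maximizes π ↦ Σ_a π(a)·r(s,a) − η⁻¹·Σ_a π_ref(a|s)·f(π(a)/π_ref(a|s)) over probability mass functions on A, and π̂(·|s) maximizes the same expression with g in place of r. Then J_r(π*) − J_r(π̂) ≤ (η/α)·Σ_{s∈S} Σ_{a∈A} ρ(s)·π_ref(a|s)·(r(s,a) − g(s,a))²; in particular the suboptimality is controlled by the squared estimation error under the reference policy, with no coverage condition. -/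
/-- The `f`-divergence-regularized objective of a policy `π` with reward `h`. -/
noncomputable def Jf {S A : Type*} [Fintype S] [Fintype A]
    (ρ : S → ℝ) (πref : S → A → ℝ) (f : ℝ → ℝ) (η : ℝ)
    (h : S → A → ℝ) (π : S → A → ℝ) : ℝ :=
  ∑ s, ρ s * ((∑ a, π s a * h s a) - η⁻¹ * ∑ a, πref s a * f (π s a / πref s a))

/-!
A maximizer of the regularized value for `g` over a convex class beats every competitor in the class
by at least `α / (2η)` times their `χ²`-distance, because strong convexity of `f` makes the value
strongly concave in that distance. Replacing `g` by `r` changes the difference of the two values by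
the pairing of `π - π̂` with `r - g`, and Young's inequality, weighted by the reference policy,
absorbs that pairing into the `χ²`-gap at the cost of `η / (2α)` times the squared error.
-/

open Set Filter Topology

theorem add_le_of_isMaxOn_segment {E : Type*} [AddCommGroup E] [Module ℝ E] {V : E → ℝ} {x y : E}
    {c : ℝ} (hmax : IsMaxOn V (segment ℝ x y) y)
    (hV : ∀ ⦃a b : ℝ⦄, 0 ≤ a → 0 ≤ b → a + b = 1 →
      a * V x + b * V y + a * b * c ≤ V (a • x + b • y)) :
    V x + c ≤ V y := by
  have gap_le : ∀ t ∈ Ioo (0 : ℝ) 1, V x + (1 - t) * c ≤ V y := by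
    rintro t ⟨ht0, ht1⟩
    have hlower := hV ht0.le (sub_nonneg.2 ht1.le) (add_sub_cancel t 1)
    have hupper : V (t • x + (1 - t) • y) ≤ V y :=
      hmax ⟨t, 1 - t, ht0.le, sub_nonneg.2 ht1.le, add_sub_cancel t 1, rfl⟩
    refine le_of_mul_le_mul_left ?_ ht0
    linarith
  have tendsto_gap : Tendsto (fun t : ℝ => V x + (1 - t) * c) (𝓝[>] 0) (𝓝 (V x + c)) := by
    have hcont : Continuous fun t : ℝ => V x + (1 - t) * c := by fun_prop
    simpa using (hcont.tendsto 0).mono_left nhdsWithin_le_nhds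
  exact le_of_tendsto tendsto_gap (eventually_of_mem (Ioo_mem_nhdsGT one_pos) gap_le)

section RegularizedValue

variable {A : Type*} [Fintype A]

/-- The `f`-divergence of `q` from the reference weights `p`, used as the regularizer. Actions with
`p a = 0` contribute nothing, so it is the usual divergence only where `p` is positive. -/
noncomputable def fDivergence (f : ℝ → ℝ) (p q : A → ℝ) : ℝ :=
  ∑ a, p a * f (q a / p a)

/-- The squared `L²(p)`-distance between the densities of `q` and `q'` with respect to `p`; for
`q' = p` it is the `χ²`-divergence. It measures the strong convexity of `fDivergence f p`. -/
noncomputable def chiSqDist (p q q' : A → ℝ) : ℝ :=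
  ∑ a, p a * (q a / p a - q' a / p a) ^ 2

/-- The regularized value of the action weights `q` for the reward `h` in a single context, so that
`Jf` is the `ρ`-weighted sum of the regularized values. -/
noncomputable def regularizedValue (p : A → ℝ) (f : ℝ → ℝ) (η : ℝ) (h q : A → ℝ) : ℝ :=
  ∑ a, q a * h a - η⁻¹ * fDivergence f p q

variable {p q q' : A → ℝ} {f : ℝ → ℝ} {I : Set ℝ} {α η : ℝ}

theorem fDivergence_combo_le (hf : StrongConvexOn I α f) (hp : ∀ a, 0 ≤ p a)
    (hq : ∀ a, q a / p a ∈ I) (hq' : ∀ a, q' a / p a ∈ I)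
    {s t : ℝ} (hs : 0 ≤ s) (ht : 0 ≤ t) (hst : s + t = 1) :
    fDivergence f p (s • q + t • q') ≤
      s * fDivergence f p q + t * fDivergence f p q' - s * t * (α / 2 * chiSqDist p q q') := by
  simp only [fDivergence, chiSqDist, Finset.mul_sum, ← Finset.sum_add_distrib,
    ← Finset.sum_sub_distrib]
  refine Finset.sum_le_sum fun a _ => ?_
  have hratio : (s • q + t • q') a / p a = s • (q a / p a) + t • (q' a / p a) := by
    simp only [Pi.add_apply, Pi.smul_apply, smul_eq_mul, add_div, mul_div_assoc]
  have hconv := mul_le_mul_of_nonneg_left (hf.2 (hq a) (hq' a) hs ht hst) (hp a)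
  simp only [smul_eq_mul, Real.norm_eq_abs, sq_abs] at hconv
  rw [hratio]
  simp only [smul_eq_mul]
  linarith

theorem le_regularizedValue_combo (hf : StrongConvexOn I α f) (hη : 0 ≤ η) (hp : ∀ a, 0 ≤ p a)
    (hq : ∀ a, q a / p a ∈ I) (hq' : ∀ a, q' a / p a ∈ I) (h : A → ℝ)
    {s t : ℝ} (hs : 0 ≤ s) (ht : 0 ≤ t) (hst : s + t = 1) :
    s * regularizedValue p f η h q + t * regularizedValue p f η h q' +
        s * t * (α / (2 * η) * chiSqDist p q q') ≤
      regularizedValue p f η h (s • q + t • q') := by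
  have hlinear : ∑ a, (s • q + t • q') a * h a = s * ∑ a, q a * h a + t * ∑ a, q' a * h a := by
    simp only [Pi.add_apply, Pi.smul_apply, smul_eq_mul, add_mul, mul_assoc,
      Finset.sum_add_distrib, Finset.mul_sum]
  have hdiv := mul_le_mul_of_nonneg_left (fDivergence_combo_le hf hp hq hq' hs ht hst)
    (inv_nonneg.2 hη)
  have hcoeff : α / (2 * η) = η⁻¹ * (α / 2) := by ring
  simp only [regularizedValue, hlinear, hcoeff]
  linarith

theorem regularizedValue_add_chiSqDist_le_of_isMaxOn (hf : StrongConvexOn I α f) (hη : 0 ≤ η)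
    (hp : ∀ a, 0 ≤ p a) (hq : ∀ a, q a / p a ∈ I) (hq' : ∀ a, q' a / p a ∈ I) {h : A → ℝ}
    (hmax : IsMaxOn (regularizedValue p f η h) (segment ℝ q q') q') :
    regularizedValue p f η h q + α / (2 * η) * chiSqDist p q q' ≤ regularizedValue p f η h q' :=
  add_le_of_isMaxOn_segment hmax fun _ _ => le_regularizedValue_combo hf hη hp hq hq' h

theorem sum_sub_mul_le_chiSqDist_add (hp : ∀ a, 0 < p a) {ε : ℝ} (hε : 0 < ε) (d : A → ℝ) :
    ∑ a, (q a - q' a) * d a ≤ ε / 2 * chiSqDist p q q' + ε⁻¹ / 2 * ∑ a, p a * d a ^ 2 := by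
  simp only [chiSqDist, Finset.mul_sum, ← Finset.sum_add_distrib]
  refine Finset.sum_le_sum fun a _ => ?_
  have hdensity : q a - q' a = p a * (q a / p a - q' a / p a) := by
    rw [← sub_div, mul_div_cancel₀ _ (hp a).ne']
  have hyoung := mul_le_mul_of_nonneg_left
    (two_mul_le_add_mul_sq (a := q a / p a - q' a / p a) (b := d a) hε) (hp a).le
  rw [hdensity]
  linarith

theorem regularizedValue_sub_eq_add_sum (p : A → ℝ) (f : ℝ → ℝ) (η : ℝ) (r g q q' : A → ℝ) :
    regularizedValue p f η r q - regularizedValue p f η r q' =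
      regularizedValue p f η g q - regularizedValue p f η g q' +
        ∑ a, (q a - q' a) * (r a - g a) := by
  simp only [regularizedValue, sub_mul, mul_sub, Finset.sum_sub_distrib]
  ring

theorem regularizedValue_sub_le_of_isMaxOn (hf : StrongConvexOn I α f) (hα : 0 < α) (hη : 0 < η)
    (hp : ∀ a, 0 < p a) (hq : ∀ a, q a / p a ∈ I) (hq' : ∀ a, q' a / p a ∈ I) (r : A → ℝ)
    {g : A → ℝ} (hmax : IsMaxOn (regularizedValue p f η g) (segment ℝ q q') q') :
    regularizedValue p f η r q - regularizedValue p f η r q' ≤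
      η / (2 * α) * ∑ a, p a * (r a - g a) ^ 2 := by
  have hgrowth := regularizedValue_add_chiSqDist_le_of_isMaxOn hf hη.le (fun a => (hp a).le)
    hq hq' hmax
  have hyoung := sum_sub_mul_le_chiSqDist_add (q := q) (q' := q') hp (div_pos hα hη)
    fun a => r a - g a
  have hgap_coeff : α / η / 2 = α / (2 * η) := by ring
  have herror_coeff : (α / η)⁻¹ / 2 = η / (2 * α) := by rw [inv_div]; ring
  rw [hgap_coeff, herror_coeff] at hyoung
  rw [regularizedValue_sub_eq_add_sum p f η r g]
  linarith

end RegularizedValue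

theorem Jf_eq_sum_regularizedValue {S A : Type*} [Fintype S] [Fintype A] (ρ : S → ℝ)
    (πref : S → A → ℝ) (f : ℝ → ℝ) (η : ℝ) (h π : S → A → ℝ) :
    Jf ρ πref f η h π = ∑ s, ρ s * regularizedValue (πref s) f η (h s) (π s) :=
  rfl

theorem stmt9_general {S A : Type*} [Fintype S] [Fintype A]
    {ρ : S → ℝ} (hρ : ∀ s, 0 ≤ ρ s) {πref : S → A → ℝ} (hπref : ∀ s a, 0 < πref s a)
    {η : ℝ} (hη : 0 < η) {α : ℝ} (hα : 0 < α)
    {f : ℝ → ℝ} (hf : StrongConvexOn (Ici 0) α f) (r : S → A → ℝ) {g : S → A → ℝ}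
    {C : S → Set (A → ℝ)} (hC : ∀ s, Convex ℝ (C s)) (hC0 : ∀ s, C s ⊆ Ici 0)
    {π πhat : S → A → ℝ} (hπ : ∀ s, π s ∈ C s) (hπhat : ∀ s, πhat s ∈ C s)
    (hmax : ∀ s, IsMaxOn (regularizedValue (πref s) f η (g s)) (C s) (πhat s)) :
    Jf ρ πref f η r π - Jf ρ πref f η r πhat ≤
      η / (2 * α) * ∑ s, ∑ a, ρ s * πref s a * (r s a - g s a) ^ 2 := by
  have hratio : ∀ s, ∀ q ∈ C s, ∀ a, q a / πref s a ∈ Ici 0 := fun s q hq a =>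
    div_nonneg (hC0 s hq a) (hπref s a).le
  have hcontext (s : S) := regularizedValue_sub_le_of_isMaxOn hf hα hη (hπref s)
    (hratio s _ (hπ s)) (hratio s _ (hπhat s)) (r s)
    ((hmax s).on_subset ((hC s).segment_subset (hπ s) (hπhat s)))
  calc Jf ρ πref f η r π - Jf ρ πref f η r πhat
      = ∑ s, ρ s * (regularizedValue (πref s) f η (r s) (π s) -
          regularizedValue (πref s) f η (r s) (πhat s)) := by
        simp only [Jf_eq_sum_regularizedValue, mul_sub, Finset.sum_sub_distrib]
    _ ≤ ∑ s, ρ s * (η / (2 * α) * ∑ a, πref s a * (r s a - g s a) ^ 2) :=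
        Finset.sum_le_sum fun s _ => mul_le_mul_of_nonneg_left (hcontext s) (hρ s)
    _ = η / (2 * α) * ∑ s, ∑ a, ρ s * πref s a * (r s a - g s a) ^ 2 := by
        simp only [Finset.mul_sum, mul_assoc, mul_left_comm]

/-- Coverage-free suboptimality bound for `f`-divergence regularization with
`α`-strongly convex `f`: if `π*` and `π̂` maximize the regularized objective for
rewards `r` and `g` respectively, then
`J_r(π*) − J_r(π̂) ≤ (η/α)·E_{ρ × π_ref}[(r − g)²]`. -/
theorem stmt9 {S A : Type*} [Fintype S] [Fintype A] [Nonempty S] [Nonempty A]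
    (ρ : S → ℝ) (hρ0 : ∀ s, 0 ≤ ρ s) (hρ1 : ∑ s, ρ s = 1)
    (πref : S → A → ℝ) (hpos : ∀ s a, 0 < πref s a) (hsum : ∀ s, ∑ a, πref s a = 1)
    (η : ℝ) (hη : 0 < η) (α : ℝ) (hα : 0 < α)
    (f : ℝ → ℝ) (hf : ConvexOn ℝ (Set.Ici (0 : ℝ)) (fun x => f x - α / 2 * x ^ 2))
    (r g : S → A → ℝ) (πstar πhat : S → A → ℝ)
    (hπstar0 : ∀ s a, 0 ≤ πstar s a) (hπstar1 : ∀ s, ∑ a, πstar s a = 1)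
    (hπhat0 : ∀ s a, 0 ≤ πhat s a) (hπhat1 : ∀ s, ∑ a, πhat s a = 1)
    (hstar : ∀ s, ∀ π : A → ℝ, (∀ a, 0 ≤ π a) → (∑ a, π a = 1) →
      (∑ a, π a * r s a) - η⁻¹ * ∑ a, πref s a * f (π a / πref s a) ≤
        (∑ a, πstar s a * r s a) - η⁻¹ * ∑ a, πref s a * f (πstar s a / πref s a))
    (hhat : ∀ s, ∀ π : A → ℝ, (∀ a, 0 ≤ π a) → (∑ a, π a = 1) →
      (∑ a, π a * g s a) - η⁻¹ * ∑ a, πref s a * f (π a / πref s a) ≤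
        (∑ a, πhat s a * g s a) - η⁻¹ * ∑ a, πref s a * f (πhat s a / πref s a)) :
    Jf ρ πref f η r πstar - Jf ρ πref f η r πhat ≤
      η / α * ∑ s, ∑ a, ρ s * πref s a * (r s a - g s a) ^ 2 := by
  have hstrong : StrongConvexOn (Ici 0) α f :=
    strongConvexOn_iff_convex.2 (by simpa only [Real.norm_eq_abs, sq_abs] using hf)
  have herror : 0 ≤ ∑ s, ∑ a, ρ s * πref s a * (r s a - g s a) ^ 2 :=
    Finset.sum_nonneg fun s _ => Finset.sum_nonneg fun a _ =>
      mul_nonneg (mul_nonneg (hρ0 s) (hpos s a).le) (sq_nonneg _)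
  calc Jf ρ πref f η r πstar - Jf ρ πref f η r πhat
      ≤ η / (2 * α) * ∑ s, ∑ a, ρ s * πref s a * (r s a - g s a) ^ 2 :=
        stmt9_general hρ0 hpos hη hα hstrong r (fun _ => convex_stdSimplex ℝ A)
          (fun _ _ hq => hq.1) (fun s => ⟨hπstar0 s, hπstar1 s⟩)
          (fun s => ⟨hπhat0 s, hπhat1 s⟩) (fun s q hq => hhat s q hq.1 hq.2)
    _ ≤ η / α * ∑ s, ∑ a, ρ s * πref s a * (r s a - g s a) ^ 2 := by
        gcongr
        linarith
end

section
/- Let S and A be nonempty finite sets, ρ a probability mass function on S with ρ(s) > 0 for all s, and π_ref a reference policy with π_ref(a|s) > 0 for all (s,a). Let F be a set of functions S×A → ℝ. For (s,a) ∈ S×A define D²(s,a) = sup of the set { ((g−h)(s,a))² / ( Σ_{s',a'} ρ(s')·π_ref(a'|s')·((g−h)(s',a'))² ) : g, h ∈ F with Σ_{s',a'} ρ(s')·π_ref(a'|s')·((g−h)(s',a'))² ≠ 0 } (with the supremum of the empty set taken to be 0). Then for every policy π*: Σ_{s∈S} Σ_{a∈A} ρ(s)·π*(a|s)·D²(s,a)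 ≤ |S|·|A|·max_{(s,a)} ( π*(a|s)/π_ref(a|s) ); i.e., the D²-based single-policy concentrability D²_{π*} is at most |S||A| times the density-ratio single-policy concentrability C^{π*}. -/
/-!
A single term of `∑ x', w x' * (g x' - h x') ^ 2` is at most the whole sum, so
`w x * D²(x) ≤ 1` for every nonnegative weight `w`. Taking `w = ρ × π_ref` and writing
`ρ × π* = w * (π* / π_ref)`, each of the `|S|·|A|` terms of `E_{ρ×π*}[D²]` is at most the density
ratio at the corresponding point.
-/

section D2Divergence

variable {X : Type*} [Fintype X]

/-- The squared `L²(w)` distance `‖g - h‖²` between two functions on a finite type. -/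
def weightedSqDist (w g h : X → ℝ) : ℝ :=
  ∑ x, w x * (g x - h x) ^ 2

/-- The `D²`-divergence of the function class `F` at `x` relative to the weight `w`: how large the
squared difference of two members of `F` can be at `x`, in units of their squared `L²(w)` distance.
The real `sSup` makes it `0` when no two members of `F` are at nonzero distance, and also when the
ratios are unbounded, which for `0 ≤ w` can happen only where `w` vanishes. -/
noncomputable def d2Divergence (w : X → ℝ) (F : Set (X → ℝ)) (x : X) : ℝ :=
  sSup {y : ℝ | ∃ g ∈ F, ∃ h ∈ F,
    weightedSqDist w g h ≠ 0 ∧ y = (g x - h x) ^ 2 / weightedSqDist w g h}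

theorem mul_sq_sub_le_weightedSqDist {w : X → ℝ} (hw : ∀ x, 0 ≤ w x) (g h : X → ℝ) (x : X) :
    w x * (g x - h x) ^ 2 ≤ weightedSqDist w g h :=
  Finset.single_le_sum (f := fun x' => w x' * (g x' - h x') ^ 2)
    (fun x' _ => mul_nonneg (hw x') (sq_nonneg _)) (Finset.mem_univ x)

theorem weightedSqDist_nonneg {w : X → ℝ} (hw : ∀ x, 0 ≤ w x) (g h : X → ℝ) :
    0 ≤ weightedSqDist w g h :=
  Finset.sum_nonneg fun x _ => mul_nonneg (hw x) (sq_nonneg _)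

theorem d2Divergence_le_inv {w : X → ℝ} (hw : ∀ x, 0 ≤ w x) (F : Set (X → ℝ)) {x : X}
    (hx : 0 < w x) : d2Divergence w F x ≤ (w x)⁻¹ := by
  refine Real.sSup_le ?_ (inv_nonneg.2 hx.le)
  rintro _ ⟨g, -, h, -, hne, rfl⟩
  have hdist : 0 < weightedSqDist w g h := (weightedSqDist_nonneg hw g h).lt_of_ne' hne
  rw [div_le_iff₀ hdist, le_inv_mul_iff₀ hx]
  exact mul_sq_sub_le_weightedSqDist hw g h x

theorem mul_d2Divergence_le_one {w : X → ℝ} (hw : ∀ x, 0 ≤ w x) (F : Set (X → ℝ)) (x : X) :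
    w x * d2Divergence w F x ≤ 1 := by
  rcases (hw x).eq_or_lt with hx | hx
  · simp [← hx]
  · rw [← le_inv_mul_iff₀ hx, mul_one]
    exact d2Divergence_le_inv hw F hx

theorem sum_mul_mul_d2Divergence_le_sum {w r : X → ℝ} (hw : ∀ x, 0 ≤ w x) (hr : ∀ x, 0 ≤ r x)
    (F : Set (X → ℝ)) : ∑ x, w x * r x * d2Divergence w F x ≤ ∑ x, r x :=
  Finset.sum_le_sum fun x _ => calc
    w x * r x * d2Divergence w F x = r x * (w x * d2Divergence w F x) := by ring
    _ ≤ r x := mul_le_of_le_one_right (hr x) (mul_d2Divergence_le_one hw F x)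

end D2Divergence

section StateAction

variable {S A : Type*} [Fintype S] [Fintype A]

theorem d2Divergence_image_uncurry (w : S → A → ℝ) (F : Set (S → A → ℝ)) (s : S) (a : A) :
    d2Divergence (Function.uncurry w) (Function.uncurry '' F) (s, a) =
      sSup {x : ℝ | ∃ g ∈ F, ∃ h ∈ F,
        (∑ s', ∑ a', w s' a' * (g s' a' - h s' a') ^ 2) ≠ 0 ∧
        x = (g s a - h s a) ^ 2 / ∑ s', ∑ a', w s' a' * (g s' a' - h s' a') ^ 2} := by
  simp only [d2Divergence, weightedSqDist, Set.exists_mem_image, Fintype.sum_prod_type,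
    Function.uncurry_apply_pair]

theorem sum_sum_le_card_mul_card_mul_iSup_iSup (r : S → A → ℝ) :
    ∑ s, ∑ a, r s a ≤ (Fintype.card S : ℝ) * (Fintype.card A : ℝ) * ⨆ s, ⨆ a, r s a := by
  have le_iSup_iSup (s : S) (a : A) : r s a ≤ ⨆ s, ⨆ a, r s a :=
    (Finite.le_ciSup (r s) a).trans (Finite.le_ciSup (fun s => ⨆ a, r s a) s)
  calc
    ∑ s, ∑ a, r s a ≤ ∑ _s : S, ∑ _a : A, ⨆ s, ⨆ a, r s a :=
      Finset.sum_le_sum fun s _ => Finset.sum_le_sum fun a _ => le_iSup_iSup s a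
    _ = (Fintype.card S : ℝ) * (Fintype.card A : ℝ) * ⨆ s, ⨆ a, r s a := by
      simp [mul_assoc]

end StateAction

theorem stmt12_general {S A : Type*} [Fintype S] [Fintype A]
    (ρ : S → ℝ) (hρ : ∀ s, 0 ≤ ρ s)
    (πref : S → A → ℝ) (hπref : ∀ s a, 0 < πref s a)
    (F : Set (S → A → ℝ))
    (πstar : S → A → ℝ) (hπstar : ∀ s a, 0 ≤ πstar s a) :
    (∑ s, ∑ a, ρ s * πstar s a *
      sSup {x : ℝ | ∃ g ∈ F, ∃ h ∈ F,
        (∑ s', ∑ a', ρ s' * πref s' a' * (g s' a' - h s' a') ^ 2) ≠ 0 ∧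
        x = (g s a - h s a) ^ 2 /
          ∑ s', ∑ a', ρ s' * πref s' a' * (g s' a' - h s' a') ^ 2})
      ≤ (Fintype.card S : ℝ) * (Fintype.card A : ℝ) *
          ⨆ s : S, ⨆ a : A, πstar s a / πref s a := by
  let w (s : S) (a : A) : ℝ := ρ s * πref s a
  let r (s : S) (a : A) : ℝ := πstar s a / πref s a
  have hw (p : S × A) : 0 ≤ Function.uncurry w p := mul_nonneg (hρ p.1) (hπref p.1 p.2).le
  have hr (p : S × A) : 0 ≤ Function.uncurry r p := div_nonneg (hπstar p.1 p.2) (hπref p.1 p.2).le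
  have change_of_measure (s : S) (a : A) : ρ s * πstar s a = w s a * r s a := by
    rw [mul_assoc, mul_div_cancel₀ _ (hπref s a).ne']
  have sum_le_sum_ratio := sum_mul_mul_d2Divergence_le_sum hw hr (Function.uncurry '' F)
  simp only [Fintype.sum_prod_type, d2Divergence_image_uncurry,
    Function.uncurry_apply_pair] at sum_le_sum_ratio
  simp only [change_of_measure]
  exact sum_le_sum_ratio.trans (sum_sum_le_card_mul_card_mul_iSup_iSup r)

/-- The `D²`-based single-policy concentrability is at most `|S|·|A|` times the
density-ratio single-policy concentrability: for any policy `π*`,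
`E_{(s,a)∼ρ×π*}[D²(s,a)] ≤ |S|·|A|·max_{(s,a)} π*(a|s)/π_ref(a|s)`. -/
theorem stmt12 {S A : Type*} [Fintype S] [Fintype A] [Nonempty S] [Nonempty A]
    (ρ : S → ℝ) (hρ0 : ∀ s, 0 < ρ s) (hρ1 : ∑ s, ρ s = 1)
    (πref : S → A → ℝ) (hpos : ∀ s a, 0 < πref s a) (hsum : ∀ s, ∑ a, πref s a = 1)
    (F : Set ((S → A → ℝ)))
    (πstar : S → A → ℝ)
    (hπstar0 : ∀ s a, 0 ≤ πstar s a) (hπstar1 : ∀ s, ∑ a, πstar s a = 1) :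
    (∑ s, ∑ a, ρ s * πstar s a *
      sSup {x : ℝ | ∃ g ∈ F, ∃ h ∈ F,
        (∑ s', ∑ a', ρ s' * πref s' a' * (g s' a' - h s' a') ^ 2) ≠ 0 ∧
        x = (g s a - h s a) ^ 2 /
          ∑ s', ∑ a', ρ s' * πref s' a' * (g s' a' - h s' a') ^ 2})
      ≤ (Fintype.card S : ℝ) * (Fintype.card A : ℝ) *
          ⨆ s : S, ⨆ a : A, πstar s a / πref s a :=
  stmt12_general ρ (fun s => (hρ0 s).le) πref hpos F πstar hπstar0
end

section
/- Let S and A be nonempty finite sets, π_ref a reference policy with π_ref(a|s) > 0 for all (s,a), η > 0, and r : S×A → [0,1]. Let π* be the Gibbs policy π*(a|s) = π_ref(a|s)·exp(η·r(s,a)) / Σ_{a'} π_ref(a'|s)·exp(η·r(s,a')). Then π*(a|s)/π_ref(a|s) ≤ exp(η) for all (s,a); i.e., the density-ratio single-policy concentrability C^{π*} of the KL-regularized optimal policy always satisfies C^{π*} ≤ exp(η) when rewards lie in [0,1]. -/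
/-!
The density ratio of the Gibbs policy at `a` is `exp (η * r s a) / Z`, where `Z` is the
`π_ref`-average of `exp (η * r s ·)`. Every averaged value is at least `exp (η * r s a - c)`, where
`c` bounds the variation of `η * r s ·`, hence so is `Z`, and the ratio is at most `exp c`.
-/

section GibbsTilt

variable {A : Type*} [Fintype A] {w f : A → ℝ} {a : A} {c : ℝ}

/-- The exponential tilt of the weights `w` by `f`, normalized to total mass one: the Gibbs policy
at a single state, with `w = π_ref(·|s)` and `f = η * r(s, ·)`. The normalizing sum may vanish for
arbitrary real weights, in which case the tilt is `0`. -/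
noncomputable def gibbsTilt (w f : A → ℝ) (a : A) : ℝ :=
  w a * Real.exp (f a) / ∑ b, w b * Real.exp (f b)

theorem gibbsTilt_div_weight (ha : w a ≠ 0) :
    gibbsTilt w f a / w a = Real.exp (f a) / ∑ b, w b * Real.exp (f b) := by
  rw [gibbsTilt, div_right_comm, mul_div_cancel_left₀ _ ha]

theorem exp_le_sum_mul_exp (hw : ∀ b, 0 ≤ w b) (hsum : ∑ b, w b = 1) (hf : ∀ b, c ≤ f b) :
    Real.exp c ≤ ∑ b, w b * Real.exp (f b) :=
  (convex_Ici (Real.exp c)).sum_mem (fun b _ => hw b) hsum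
    fun b _ => Real.exp_le_exp.mpr (hf b)

theorem gibbsTilt_div_weight_le_exp (hw : ∀ b, 0 ≤ w b) (hsum : ∑ b, w b = 1) (ha : w a ≠ 0)
    (hf : ∀ b, f a - f b ≤ c) : gibbsTilt w f a / w a ≤ Real.exp c := by
  have le_partition : Real.exp (f a - c) ≤ ∑ b, w b * Real.exp (f b) :=
    exp_le_sum_mul_exp hw hsum fun b => sub_le_comm.mp (hf b)
  calc gibbsTilt w f a / w a
      = Real.exp (f a) / ∑ b, w b * Real.exp (f b) := gibbsTilt_div_weight ha
    _ ≤ Real.exp (f a) / Real.exp (f a - c) := by gcongr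
    _ = Real.exp c := by rw [← Real.exp_sub, sub_sub_cancel]

end GibbsTilt

theorem stmt13_general {S A : Type*} [Fintype A]
    (πref : S → A → ℝ) (hpos : ∀ s a, 0 < πref s a) (hsum : ∀ s, ∑ a, πref s a = 1)
    (η : ℝ) (r : S → A → ℝ) (R : ℝ) (hr : ∀ s a b, |r s a - r s b| ≤ R)
    (πstar : S → A → ℝ) (hπstar : ∀ s a, πstar s a = gibbsTilt (πref s) (fun b => η * r s b) a) :
    ∀ s a, πstar s a / πref s a ≤ Real.exp (|η| * R) := by
  intro s a
  rw [hπstar]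
  refine gibbsTilt_div_weight_le_exp (fun b => (hpos s b).le) (hsum s) (hpos s a).ne' fun b => ?_
  calc η * r s a - η * r s b
      ≤ |η * (r s a - r s b)| := by rw [← mul_sub]; exact le_abs_self _
    _ = |η| * |r s a - r s b| := abs_mul _ _
    _ ≤ |η| * R := by gcongr; exact hr s a b

/-- With rewards in `[0,1]`, the KL-regularized optimal (Gibbs) policy `π*`
always has density-ratio single-policy concentrability at most `exp η`:
`π*(a|s)/π_ref(a|s) ≤ exp η` for all `(s,a)`. -/
theorem stmt13 {S A : Type*} [Fintype S] [Fintype A] [Nonempty S] [Nonempty A]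
    (πref : S → A → ℝ) (hpos : ∀ s a, 0 < πref s a) (hsum : ∀ s, ∑ a, πref s a = 1)
    (η : ℝ) (hη : 0 < η)
    (r : S → A → ℝ) (hr : ∀ s a, r s a ∈ Set.Icc (0 : ℝ) 1)
    (πstar : S → A → ℝ)
    (hπstar : ∀ s a, πstar s a =
      πref s a * Real.exp (η * r s a) / ∑ a', πref s a' * Real.exp (η * r s a')) :
    ∀ s a, πstar s a / πref s a ≤ Real.exp η := by
  simpa only [abs_of_pos hη, mul_one] using
    stmt13_general πref hpos hsum η r 1
      (fun s a b => abs_sub_le_of_nonneg_of_le (hr s a).1 (hr s a).2 (hr s b).1 (hr s b).2)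
      πstar hπstar
end

section
/- Let A be a nonempty finite set and let μ, p, q be probability mass functions on A with p(a) > 0 and q(a) > 0 for all a. Then KL(μ‖p) + KL(μ‖q) ≥ −2·log( Σ_{a∈A} √(p(a)·q(a)) ). -/
/-!
Pointwise, `log (μ / p) + log (μ / q) = 2 * log (μ / √(p * q))`, so the sum of the two divergences
is twice the divergence of `μ` from the unnormalised weight `√(p * q)`. The log-sum inequality,
which is Jensen's inequality for `x ↦ x * log x`, bounds the latter from below by the total masses.
-/

open Finset Real

section

variable {ι : Type*} {s : Finset ι}

theorem sum_mul_log_sum_div_sum_le {μ r : ι → ℝ} (hμ : ∀ i ∈ s, 0 ≤ μ i)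
    (hr : ∀ i ∈ s, 0 ≤ r i) (hμr : ∀ i ∈ s, r i = 0 → μ i = 0) :
    (∑ i ∈ s, μ i) * log ((∑ i ∈ s, μ i) / ∑ i ∈ s, r i) ≤ ∑ i ∈ s, μ i * log (μ i / r i) := by
  rcases (sum_nonneg hr).eq_or_lt with hR | hR
  · have hμ_zero : ∀ i ∈ s, μ i = 0 := fun i hi ↦
      hμr i hi ((sum_eq_zero_iff_of_nonneg hr).mp hR.symm i hi)
    rw [sum_eq_zero hμ_zero, zero_mul]
    exact (sum_eq_zero fun i hi ↦ by rw [hμ_zero i hi, zero_mul]).ge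
  · have r_mul_div : ∀ i ∈ s, r i * (μ i / r i) = μ i := fun i hi ↦
      mul_div_cancel_of_imp' (hμr i hi)
    have barycenter : s.centerMass r (fun i ↦ μ i / r i) = (∑ i ∈ s, μ i) / ∑ i ∈ s, r i := by
      simp only [centerMass, smul_eq_mul, inv_mul_eq_div]
      rw [sum_congr rfl r_mul_div]
    have average : s.centerMass r (fun i ↦ μ i / r i * log (μ i / r i)) =
        (∑ i ∈ s, μ i * log (μ i / r i)) / ∑ i ∈ s, r i := by
      simp only [centerMass, smul_eq_mul, inv_mul_eq_div]
      congr 1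
      exact sum_congr rfl fun i hi ↦ by rw [← mul_assoc, r_mul_div i hi]
    have jensen := convexOn_mul_log.map_centerMass_le hr hR
      fun i hi ↦ Set.mem_Ici.mpr (div_nonneg (hμ i hi) (hr i hi))
    simp only [Function.comp_def] at jensen
    rwa [average, barycenter, div_mul_eq_mul_div, div_le_div_iff_of_pos_right hR] at jensen

theorem log_div_add_log_div_eq_two_mul_log_div_sqrt {x p q : ℝ} (hx : x ≠ 0) (hp : 0 < p)
    (hq : 0 < q) : log (x / p) + log (x / q) = 2 * log (x / √(p * q)) := by
  have hpq : 0 < p * q := mul_pos hp hq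
  rw [log_div hx hp.ne', log_div hx hq.ne', log_div hx (sqrt_pos.mpr hpq).ne',
    log_sqrt hpq.le, log_mul hp.ne' hq.ne']
  ring

theorem sum_mul_log_div_add_sum_mul_log_div_eq_two_mul_sum {μ p q : ι → ℝ}
    (hp : ∀ i ∈ s, 0 ≤ p i) (hq : ∀ i ∈ s, 0 ≤ q i)
    (hμp : ∀ i ∈ s, p i = 0 → μ i = 0) (hμq : ∀ i ∈ s, q i = 0 → μ i = 0) :
    ∑ i ∈ s, μ i * log (μ i / p i) + ∑ i ∈ s, μ i * log (μ i / q i) =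
      2 * ∑ i ∈ s, μ i * log (μ i / √(p i * q i)) := by
  rw [← sum_add_distrib, mul_sum]
  refine sum_congr rfl fun i hi ↦ ?_
  rcases eq_or_ne (μ i) 0 with hμi | hμi
  · simp [hμi]
  · have hpi : 0 < p i := (hp i hi).lt_of_ne' (mt (hμp i hi) hμi)
    have hqi : 0 < q i := (hq i hi).lt_of_ne' (mt (hμq i hi) hμi)
    rw [← mul_add, log_div_add_log_div_eq_two_mul_log_div_sqrt hμi hpi hqi, mul_left_comm]

theorem stmt14_general {μ p q : ι → ℝ} (hμ : ∀ i ∈ s, 0 ≤ μ i)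
    (hp : ∀ i ∈ s, 0 ≤ p i) (hq : ∀ i ∈ s, 0 ≤ q i)
    (hμp : ∀ i ∈ s, p i = 0 → μ i = 0) (hμq : ∀ i ∈ s, q i = 0 → μ i = 0) :
    2 * ((∑ i ∈ s, μ i) * log ((∑ i ∈ s, μ i) / ∑ i ∈ s, √(p i * q i))) ≤
      ∑ i ∈ s, μ i * log (μ i / p i) + ∑ i ∈ s, μ i * log (μ i / q i) := by
  have hμ_sqrt : ∀ i ∈ s, √(p i * q i) = 0 → μ i = 0 := fun i hi h ↦
    (mul_eq_zero.mp ((sqrt_eq_zero (mul_nonneg (hp i hi) (hq i hi))).mp h)).elim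
      (hμp i hi) (hμq i hi)
  rw [sum_mul_log_div_add_sum_mul_log_div_eq_two_mul_sum hp hq hμp hμq]
  gcongr
  exact sum_mul_log_sum_div_sum_le hμ (fun _ _ ↦ sqrt_nonneg _) hμ_sqrt

end

/-- Bhattacharyya-type bound: for pmfs `μ, p, q` on a finite set with `p, q`
everywhere positive, `KL(μ‖p) + KL(μ‖q) ≥ −2·log(Σ_a √(p(a)·q(a)))`. -/
theorem stmt14 {A : Type*} [Fintype A] [Nonempty A]
    (μ p q : A → ℝ)
    (hμ0 : ∀ a, 0 ≤ μ a) (hμ1 : ∑ a, μ a = 1)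
    (hp0 : ∀ a, 0 < p a) (hp1 : ∑ a, p a = 1)
    (hq0 : ∀ a, 0 < q a) (hq1 : ∑ a, q a = 1) :
    -2 * Real.log (∑ a, Real.sqrt (p a * q a)) ≤
      (∑ a, μ a * Real.log (μ a / p a)) + ∑ a, μ a * Real.log (μ a / q a) := by
  simpa [hμ1] using stmt14_general (s := univ) (fun a _ ↦ hμ0 a) (fun a _ ↦ (hp0 a).le)
    (fun a _ ↦ (hq0 a).le) (fun a _ h ↦ absurd h (hp0 a).ne') (fun a _ h ↦ absurd h (hq0 a).ne')
end

section
/- For all real η > 0 and δ > 0: η⁻¹·log( (e^{ηδ} + 1)·(e^{−ηδ} + 1) / 4 ) ≥ min( η·δ²/8 , 3·δ/10 ). Specifically, if η·δ ≤ 2 the left-hand side is at least η·δ²/8, and if η·δ > 2 it is at least 3·δ/10. -/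
/-!
The product `(eˣ + 1)(e⁻ˣ + 1)` equals `4 cosh² (x / 2)`, so the logarithm is `2 log cosh (x / 2)`.
Near the origin `cosh t ≥ 1 + t² / 2` and `log (1 + u) ≥ 2u / (u + 2)` give `log cosh t ≥ t² / 4`,
while far from it `cosh t ≥ e^|t| / 2` gives `log cosh t ≥ |t| - log 2`; for `x ≥ 2` the loss
`2 log 2 < 1.4` is at most `7x / 10`.
-/

open Real

theorem one_add_sq_div_two_le_cosh (t : ℝ) : 1 + t ^ 2 / 2 ≤ cosh t := by
  have half_sq_le_sinh_sq : (t / 2) ^ 2 ≤ sinh (t / 2) ^ 2 := by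
    rw [sq_le_sq, abs_sinh]
    exact self_le_sinh_iff.2 (abs_nonneg _)
  calc 1 + t ^ 2 / 2 = 1 + 2 * (t / 2) ^ 2 := by ring
    _ ≤ 1 + 2 * sinh (t / 2) ^ 2 := by gcongr
    _ = cosh (2 * (t / 2)) := by rw [cosh_two_mul, cosh_sq]; ring
    _ = cosh t := by rw [mul_div_cancel₀ t two_ne_zero]

theorem sq_div_four_le_log_cosh {t : ℝ} (ht : |t| ≤ 2) : t ^ 2 / 4 ≤ log (cosh t) := by
  have sq_le_four : t ^ 2 ≤ 4 := by
    rw [← sq_abs]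
    nlinarith [abs_nonneg t]
  calc t ^ 2 / 4 ≤ 2 * (t ^ 2 / 2) / (t ^ 2 / 2 + 2) := by
        rw [le_div_iff₀ (by positivity)]
        nlinarith [sq_nonneg t]
    _ ≤ log (1 + t ^ 2 / 2) := le_log_one_add_of_nonneg (by positivity)
    _ ≤ log (cosh t) := log_le_log (by positivity) (one_add_sq_div_two_le_cosh t)

theorem abs_sub_log_two_le_log_cosh (t : ℝ) : |t| - log 2 ≤ log (cosh t) := by
  have exp_abs_div_two_le_cosh : exp |t| / 2 ≤ cosh t := by
    rw [← cosh_abs, cosh_eq]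
    gcongr
    exact le_add_of_nonneg_right (exp_pos _).le
  calc |t| - log 2 = log (exp |t| / 2) := by rw [log_div (exp_ne_zero _) two_ne_zero, log_exp]
    _ ≤ log (cosh t) := log_le_log (by positivity) exp_abs_div_two_le_cosh

theorem exp_add_one_mul_exp_neg_add_one (x : ℝ) :
    (exp x + 1) * (exp (-x) + 1) = 4 * cosh (x / 2) ^ 2 := by
  have exp_mul_exp_neg : exp x * exp (-x) = 1 := by rw [← exp_add, add_neg_cancel, exp_zero]
  calc (exp x + 1) * (exp (-x) + 1) = 2 + 2 * cosh x := by
        rw [cosh_eq]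
        linear_combination exp_mul_exp_neg
    _ = 2 + 2 * cosh (2 * (x / 2)) := by rw [mul_div_cancel₀ x two_ne_zero]
    _ = 4 * cosh (x / 2) ^ 2 := by
        rw [cosh_two_mul, sinh_sq]
        ring

theorem log_exp_add_one_mul_exp_neg_add_one_div_four (x : ℝ) :
    log ((exp x + 1) * (exp (-x) + 1) / 4) = 2 * log (cosh (x / 2)) := by
  rw [exp_add_one_mul_exp_neg_add_one, mul_div_cancel_left₀ _ four_ne_zero, log_pow, Nat.cast_ofNat]

theorem sq_div_eight_le_log_exp_add_one_mul {x : ℝ} (hx : |x| ≤ 4) :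
    x ^ 2 / 8 ≤ log ((exp x + 1) * (exp (-x) + 1) / 4) := by
  have abs_half_le : |x / 2| ≤ 2 := by
    rw [abs_div, abs_two]
    linarith
  rw [log_exp_add_one_mul_exp_neg_add_one_div_four]
  linarith [sq_div_four_le_log_cosh abs_half_le]

theorem three_mul_div_ten_le_log_exp_add_one_mul {x : ℝ} (hx : 2 ≤ x) :
    3 * x / 10 ≤ log ((exp x + 1) * (exp (-x) + 1) / 4) := by
  rw [log_exp_add_one_mul_exp_neg_add_one_div_four]
  linarith [abs_sub_log_two_le_log_cosh (x / 2), le_abs_self (x / 2), log_two_lt_d9]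

/-- Elementary rate inequality: for `η, δ > 0`,
`η⁻¹·log((e^{ηδ} + 1)·(e^{−ηδ} + 1)/4) ≥ min(η·δ²/8, 3·δ/10)`; specifically
the left-hand side is at least `η·δ²/8` when `η·δ ≤ 2` and at least `3·δ/10`
when `η·δ > 2`. -/
theorem stmt16 (η δ : ℝ) (hη : 0 < η) (hδ : 0 < δ) :
    min (η * δ ^ 2 / 8) (3 * δ / 10) ≤
      η⁻¹ * Real.log ((Real.exp (η * δ) + 1) * (Real.exp (-(η * δ)) + 1) / 4) ∧
    (η * δ ≤ 2 →
      η * δ ^ 2 / 8 ≤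
        η⁻¹ * Real.log ((Real.exp (η * δ) + 1) * (Real.exp (-(η * δ)) + 1) / 4)) ∧
    (2 < η * δ →
      3 * δ / 10 ≤
        η⁻¹ * Real.log ((Real.exp (η * δ) + 1) * (Real.exp (-(η * δ)) + 1) / 4)) := by
  simp only [le_inv_mul_iff₀ hη]
  have quadratic_rate (h : η * δ ≤ 2) : η * (η * δ ^ 2 / 8) ≤
      log ((exp (η * δ) + 1) * (exp (-(η * δ)) + 1) / 4) := by
    have abs_le_four : |η * δ| ≤ 4 := by
      rw [abs_of_pos (mul_pos hη hδ)]
      linarith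
    linarith [sq_div_eight_le_log_exp_add_one_mul abs_le_four]
  have linear_rate (h : 2 < η * δ) : η * (3 * δ / 10) ≤
      log ((exp (η * δ) + 1) * (exp (-(η * δ)) + 1) / 4) := by
    linarith [three_mul_div_ten_le_log_exp_add_one_mul h.le]
  refine ⟨?_, quadratic_rate, linear_rate⟩
  rw [mul_min_of_nonneg _ _ hη.le, min_le_iff]
  exact (le_or_gt (η * δ) 2).imp quadratic_rate linear_rate
end
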